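/- Terracini's Lemma: if X ⊂ P^r is an irreducible projective variety, p_0,…,p_k ∈ X are general points, and x ∈ ⟨p_0,…,p_k⟩ is a general point of the span, then the embedded tangent space to S^k(X) at x equals the span of the tangent spaces T_{X,p_0},…,T_{X,p_k}. -/

import Mathlib

open MvPolynomial Classical

noncomputable section

/-- A subset of affine space is algebraic if it is the zero locus of a set of polynomials. -/
def IsAlg {N : ℕ} (S : Set (Fin N → ℂ)) : Prop :=
  ∃ I : Set (MvPolynomial (Fin N) ℂ), S = {x | ∀ f ∈ I, eval x f = 0}

/-- Zariski closure. -/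
def zcl {N : ℕ} (S : Set (Fin N → ℂ)) : Set (Fin N → ℂ) :=
  ⋂₀ {T | IsAlg T ∧ S ⊆ T}

/-- Affine cones (over projective sets). -/
def IsCone {N : ℕ} (S : Set (Fin N → ℂ)) : Prop :=
  (0 : Fin N → ℂ) ∈ S ∧ ∀ c : ℂ, ∀ x ∈ S, c • x ∈ S

/-- Irreducible algebraic subsets. -/
def IrrAlg {N : ℕ} (S : Set (Fin N → ℂ)) : Prop :=
  IsAlg S ∧ S.Nonempty ∧ ∀ T₁ T₂ : Set (Fin N → ℂ), IsAlg T₁ → IsAlg T₂ →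
    S ⊆ T₁ ∪ T₂ → (S ⊆ T₁ ∨ S ⊆ T₂)

/-- Non-degenerate: the cone spans the ambient space. -/
def Nondeg {N : ℕ} (S : Set (Fin N → ℂ)) : Prop :=
  Submodule.span ℂ S = ⊤

/-- Projective dimension of (the projectivization of) a cone `S`,
defined as the Krull dimension of the poset of irreducible algebraic
subcones of `S` different from `{0}`. -/
noncomputable def pdim {N : ℕ} (S : Set (Fin N → ℂ)) : WithBot ℕ∞ :=
  Order.krullDim {T : Set (Fin N → ℂ) // IrrAlg T ∧ IsCone T ∧ T ≠ {0} ∧ T ⊆ S}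

/-- Cast a natural number into `WithBot ℕ∞`. -/
def nn (a : ℕ) : WithBot ℕ∞ := ((a : ℕ∞) : WithBot ℕ∞)

/-- Join of two cones. -/
def joinSet {N : ℕ} (S T : Set (Fin N → ℂ)) : Set (Fin N → ℂ) :=
  zcl {x | ∃ u ∈ S, ∃ v ∈ T, x = u + v}

/-- `secant k S` is (the cone over) the `k`-secant variety `S^k(X) = J(X^{k+1})`. -/
def secant {N : ℕ} : ℕ → Set (Fin N → ℂ) → Set (Fin N → ℂ)
  | 0, S => zcl S
  | (k+1), S => joinSet (secant k S) S

/-- Join of a finite family of cones. -/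
def joinFam {N m : ℕ} (F : Fin m → Set (Fin N → ℂ)) : Set (Fin N → ℂ) :=
  zcl {x | ∃ q : Fin m → Fin N → ℂ, (∀ i, q i ∈ F i) ∧ x = ∑ i, q i}

/-- Irreducible components. -/
def IsComponent {N : ℕ} (S T : Set (Fin N → ℂ)) : Prop :=
  IrrAlg T ∧ T ⊆ S ∧ ∀ T', IrrAlg T' → T' ⊆ S → T ⊆ T' → T = T'

/-- Union of the irreducible components of `S` through `x`. -/
def compThrough {N : ℕ} (S : Set (Fin N → ℂ)) (x : Fin N → ℂ) : Set (Fin N → ℂ) :=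
  ⋃₀ {T | IsComponent S T ∧ x ∈ T}

/-- Pure (equidimensional) sets. -/
def IsPure {N : ℕ} (S : Set (Fin N → ℂ)) : Prop :=
  ∀ T T', IsComponent S T → IsComponent S T' → pdim T = pdim T'

/-- Secant variety in the convention for possibly reducible varieties:
union of the joins of `k+1` distinct irreducible components (and the usual
secant variety in the irreducible case). -/
def SecantD {N : ℕ} (k : ℕ) (Y : Set (Fin N → ℂ)) : Set (Fin N → ℂ) :=
  (⋃₀ {J | ∃ T : Fin (k+1) → Set (Fin N → ℂ),
      (∀ i, IsComponent Y (T i)) ∧ Function.Injective T ∧ J = joinFam T})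
  ∪ {x | IrrAlg Y ∧ x ∈ secant k Y}

/-- The (cone over the) embedded tangent space at `x`: directions annihilated by the
differentials at `x` of all polynomials vanishing on `S`. -/
def embTangent {N : ℕ} (S : Set (Fin N → ℂ)) (x : Fin N → ℂ) : Set (Fin N → ℂ) :=
  {v | ∀ f : MvPolynomial (Fin N) ℂ, (∀ y ∈ S, eval y f = 0) →
      ∑ i, v i * eval x (pderiv i f) = 0}

def tanSpan {N : ℕ} (S : Set (Fin N → ℂ)) (x : Fin N → ℂ) : Submodule ℂ (Fin N → ℂ) :=
  Submodule.span ℂ (embTangent S x)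

/-- `x` is a smooth point of the `n`-dimensional projective variety with cone `S`. -/
def IsSmoothAt {N : ℕ} (S : Set (Fin N → ℂ)) (n : ℕ) (x : Fin N → ℂ) : Prop :=
  Module.finrank ℂ (tanSpan S x) = n + 1

/-- Algebraic subsets of tuple spaces. -/
def IsAlgT {N m : ℕ} (S : Set (Fin m → Fin N → ℂ)) : Prop :=
  ∃ I : Set (MvPolynomial (Fin m × Fin N) ℂ),
    S = {q | ∀ f ∈ I, eval (fun p => q p.1 p.2) f = 0}

/-- `P` holds for general (tuples of) points of `X`. -/
def Generically {N : ℕ} (m : ℕ) (X : Set (Fin N → ℂ))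
    (P : (Fin m → Fin N → ℂ) → Prop) : Prop :=
  ∃ B : Set (Fin m → Fin N → ℂ), IsAlgT B ∧ ¬ ({q | ∀ i, q i ∈ X} ⊆ B) ∧
    ∀ q : Fin m → Fin N → ℂ, (∀ i, q i ∈ X ∧ q i ≠ 0) → q ∉ B → P q

/-- `P` holds for general points of the set `S`. -/
def GenericallyOn {N : ℕ} (S : Set (Fin N → ℂ)) (P : (Fin N → ℂ) → Prop) : Prop :=
  ∃ B : Set (Fin N → ℂ), IsAlg B ∧ ¬ (S ⊆ B) ∧ ∀ x ∈ S, x ∉ B → x ≠ 0 → P x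

/-- `L` is `J_k`-tangent to `X` along `Y`: for every analytic arc of a point of `X`
and `s ≤ k` points of `Y`, linearly independent off `0`, with the `X`-point off `L`
for `t ≠ 0` and on `L` at `t = 0`, the flat limit of the spanned `s`-space
(described through analytic selections of vectors) lies in `L`. -/
def JkTangent {N : ℕ} (k : ℕ) (X Y : Set (Fin N → ℂ))
    (L : Submodule ℂ (Fin N → ℂ)) : Prop :=
  ∀ s : ℕ, 1 ≤ s → s ≤ k → ∀ q : Fin (s+1) → ℂ → (Fin N → ℂ), ∀ ε : ℝ, 0 < ε →
    (∀ i, AnalyticOnNhd ℂ (q i) (Metric.ball 0 ε)) →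
    (∀ t ∈ Metric.ball (0:ℂ) ε, q 0 t ∈ X) →
    (∀ i : Fin (s+1), i ≠ 0 → ∀ t ∈ Metric.ball (0:ℂ) ε, q i t ∈ Y) →
    (∀ t ∈ Metric.ball (0:ℂ) ε, t ≠ 0 → LinearIndependent ℂ (fun i => q i t)) →
    (∀ t ∈ Metric.ball (0:ℂ) ε, t ≠ 0 → q 0 t ∉ L) →
    q 0 0 ∈ L →
    ∀ w : ℂ → (Fin N → ℂ), AnalyticOnNhd ℂ w (Metric.ball 0 ε) →
      (∀ t ∈ Metric.ball (0:ℂ) ε, t ≠ 0 →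
        w t ∈ Submodule.span ℂ (Set.range (fun i => q i t))) →
      w 0 ∈ L

/-- `X` is `k`-smooth along `Y`: it is smooth along `Y` and any arc-limit
scheme of `m ≤ k+1` points of `X` supported on `Y` spans the right dimension,
i.e. pairwise non-proportional arcs of points stay linearly independent. -/
def KSmoothAlong {N : ℕ} (k n : ℕ) (X Y : Set (Fin N → ℂ)) : Prop :=
  (∀ y ∈ Y, y ≠ 0 → IsSmoothAt X n y) ∧
  ∀ m : ℕ, 2 ≤ m → m ≤ k + 1 → ∀ q : Fin m → ℂ → (Fin N → ℂ), ∀ ε : ℝ, 0 < ε →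
    (∀ i, AnalyticOnNhd ℂ (q i) (Metric.ball 0 ε)) →
    (∀ i, ∀ t ∈ Metric.ball (0:ℂ) ε, q i t ∈ X) →
    (∀ i, q i 0 ∈ Y ∧ q i 0 ≠ 0) →
    (∀ t ∈ Metric.ball (0:ℂ) ε, t ≠ 0 → ∀ i j : Fin m, i ≠ j →
        ∀ c : ℂ, q i t ≠ c • q j t) →
    ∀ t ∈ Metric.ball (0:ℂ) ε, t ≠ 0 → LinearIndependent ℂ (fun i => q i t)

def KSmooth {N : ℕ} (k n : ℕ) (X : Set (Fin N → ℂ)) : Prop := KSmoothAlong k n X X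

/-- The hyperplane with coefficient vector `c`. -/
def hypSub {N : ℕ} (c : Fin N → ℂ) : Submodule ℂ (Fin N → ℂ) :=
  LinearMap.ker (Finset.univ.sum fun i => c i • (LinearMap.proj i : (Fin N → ℂ) →ₗ[ℂ] ℂ))

/-- The hyperplane with coefficients `c` is tangent to `X` at the points `p j`. -/
def TangentHypAt {N m : ℕ} (X : Set (Fin N → ℂ)) (p : Fin m → Fin N → ℂ)
    (c : Fin N → ℂ) : Prop :=
  c ≠ 0 ∧ ∀ j, embTangent X (p j) ⊆ ↑(hypSub c)

/-- The tangential contact locus `Γ_{p_0,…,p_m}`: union of the irreducible components,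
through the points `p j`, of the closure of the locus of smooth points whose tangent
space lies in the span of the tangent spaces at the `p j` (`= T_{S^m(X),x}` by Terracini). -/
def GammaLocus {N m : ℕ} (X : Set (Fin N → ℂ)) (n : ℕ)
    (p : Fin m → Fin N → ℂ) : Set (Fin N → ℂ) :=
  ⋃₀ {T | IsComponent (zcl {q | q ∈ X ∧ q ≠ 0 ∧ IsSmoothAt X n q ∧
      embTangent X q ⊆ ↑(Submodule.span ℂ (⋃ j, embTangent X (p j)))}) T ∧ ∃ j, p j ∈ T}

/-- The projection contact locus `Ψ_{p_0,…,p_j}`: the component through `p 0` of the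
fibre through `p 0` of the tangential projection from `T_{X,p_1,…,p_j}`. -/
def PsiLocus {N j : ℕ} (X : Set (Fin N → ℂ))
    (p : Fin (j+1) → Fin N → ℂ) : Set (Fin N → ℂ) :=
  compThrough (X ∩ ↑(Submodule.span ℂ
    ((⋃ i : Fin j, embTangent X (p i.succ)) ∪ {p 0}))) (p 0)

/-- `X` is an `R_k`-variety: for `1 ≤ i ≤ k` and general points `p_0,…,p_i`, the
general hyperplane tangent to `X` at these points is `J_i`-tangent to `X` along the
tangential `i`-contact locus. -/
def RkVariety {N : ℕ} (k n : ℕ) (X : Set (Fin N → ℂ)) : Prop :=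
  ∀ i : ℕ, 1 ≤ i → i ≤ k →
    Generically (i+1) X fun p =>
      ∃ B : Set (Fin N → ℂ), IsAlg B ∧ ¬ ({c | TangentHypAt X p c} ⊆ B) ∧
        ∀ c, TangentHypAt X p c → c ∉ B → JkTangent i X (GammaLocus X n p) (hypSub c)

/-- The entry locus of `x` with respect to the `k`-secant variety of `X`. -/
def EntryLocus {N : ℕ} (k : ℕ) (X : Set (Fin N → ℂ)) (x : Fin N → ℂ) :
    Set (Fin N → ℂ) :=
  zcl {z | z ∈ X ∧ z ≠ 0 ∧ ∃ x' ∈ secant (k-1) X, x' ∉ Submodule.span ℂ {z} ∧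
      x ∈ Submodule.span ℂ ({z, x'} : Set (Fin N → ℂ))}

/-- `k`-Severi varieties: irreducible, non-degenerate `R_k`-varieties of dimension `n`
with `dim S^k(X) < r` and `dim S^k(X) = (k+2)n/2 + k`. -/
def KSeveri {N : ℕ} (k n : ℕ) (X : Set (Fin N → ℂ)) : Prop :=
  IrrAlg X ∧ IsCone X ∧ X ≠ {0} ∧ Nondeg X ∧ pdim X = nn n ∧
  RkVariety k n X ∧
  pdim (secant k X) < pdim (Set.univ : Set (Fin N → ℂ)) ∧
  pdim (secant k X) + pdim (secant k X) = nn ((k+2)*n + 2*k)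

/-!
Moving a single `q_i` along `X` keeps `∑ q_i` in `S^k(X)`, so every `T_{X,q_i}` lies in the tangent
space of `S^k(X)` at `∑ q_i`. Conversely, the sum map `X^(k+1) → S^k(X)` is dominant with
irreducible source, hence, in characteristic zero, smooth over the generic point of its source.
Tangent vectors being points over the dual numbers, the infinitesimal lifting property of smooth
maps then lifts every tangent vector of `S^k(X)` at `∑ q_i` to a tangent vector of `X^(k+1)` at a
general `(q₀, …, qₖ)`, that is, to a sum of vectors in the `T_{X,q_i}`. Since `X` is a cone, a
general point `∑ c_i p_i` of the span is the sum of the points `q_i = c_i p_i`, which are still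
general, and `T_{X,q_i} = T_{X,p_i}`.
-/

theorem eval_bind₁ {R σ τ : Type*} [CommSemiring R] (g : σ → MvPolynomial τ R) (y : τ → R)
    (f : MvPolynomial σ R) : eval y (bind₁ g f) = eval (fun i => eval y (g i)) f :=
  eval₂Hom_bind₁ _ _ _ _

section Differential

variable {K σ τ : Type*} [CommRing K] [Fintype σ]

/-- The differential at the point `a` of a polynomial function on affine space, as a linear form on
directions. -/
def differential (a : σ → K) : MvPolynomial σ K →ₗ[K] (σ → K) →ₗ[K] K :=
  Fintype.bilinearCombination K K ∘ₗ
    LinearMap.pi fun i => (aeval a).toLinearMap ∘ₗ (pderiv i).toLinearMap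

theorem differential_apply (a : σ → K) (f : MvPolynomial σ K) (v : σ → K) :
    differential a f v = ∑ i, v i * eval a (pderiv i f) := by
  simp [differential, Fintype.bilinearCombination_apply, aeval_eq_eval,
    Fintype.linearCombination_apply]

@[simp]
theorem differential_X (a : σ → K) (i : σ) (v : σ → K) : differential a (X i) v = v i := by
  simp [differential_apply, pderiv_X, Pi.single_apply, apply_ite]

@[simp]
theorem differential_C (a : σ → K) (c : K) : differential a (C c) = 0 := by
  ext v
  simp [differential_apply]

/-- The tangent vector `v` at the point `a`, encoded as the point `a + ε v` with coordinates in the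
dual numbers. -/
def dualPoint (a v : σ → K) (i : σ) : DualNumber K :=
  TrivSqZeroExt.inl (a i) + TrivSqZeroExt.inr (v i)

theorem aeval_dualPoint (a v : σ → K) (f : MvPolynomial σ K) :
    aeval (dualPoint a v) f =
      TrivSqZeroExt.inl (eval a f) + TrivSqZeroExt.inr (differential a f v) := by
  induction f using MvPolynomial.induction_on with
  | C c => simp [TrivSqZeroExt.algebraMap_eq_inl]
  | add f g hf hg =>
    simp only [map_add, hf, hg, LinearMap.add_apply, TrivSqZeroExt.inl_add,
      TrivSqZeroExt.inr_add, add_add_add_comm]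
  | mul_X f i hf =>
    simp only [map_mul, hf, aeval_X, dualPoint, differential_apply]
    ext
    · simp
    · simp [pderiv_X, Pi.single_apply, apply_ite, mul_add, Finset.sum_add_distrib,
        Finset.mul_sum, mul_left_comm, mul_comm]

variable [Fintype τ]

theorem differential_bind₁ (g : σ → MvPolynomial τ K) (y v : τ → K) (f : MvPolynomial σ K) :
    differential y (bind₁ g f) v =
      differential (fun i => eval y (g i)) f fun i => differential y (g i) v := by
  have h : aeval (dualPoint y v) (bind₁ g f) =
      aeval (dualPoint (fun i => eval y (g i)) fun i => differential y (g i) v) f := by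
    rw [aeval_bind₁]
    exact congrArg (aeval · f) (funext fun i => aeval_dualPoint y v (g i))
  simpa [aeval_dualPoint] using congrArg TrivSqZeroExt.snd h

/-- The Zariski tangent space at `a` of the affine scheme cut out by the ideal `I`, as a subspace of
the ambient affine space. It is meaningful when `a` is a zero of `I`. -/
def tangentSpace (I : Ideal (MvPolynomial σ K)) (a : σ → K) : Submodule K (σ → K) :=
  ⨅ f ∈ I, LinearMap.ker (differential a f)

theorem mem_tangentSpace {I : Ideal (MvPolynomial σ K)} {a v : σ → K} :
    v ∈ tangentSpace I a ↔ ∀ f ∈ I, differential a f v = 0 := by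
  simp [tangentSpace]

theorem mem_tangentSpace_iff_forall_aeval_dualPoint {I : Ideal (MvPolynomial σ K)} {a v : σ → K}
    (ha : ∀ f ∈ I, eval a f = 0) :
    v ∈ tangentSpace I a ↔ ∀ f ∈ I, aeval (dualPoint a v) f = 0 := by
  rw [mem_tangentSpace]
  refine forall₂_congr fun f hf => ?_
  simp [aeval_dualPoint, ha f hf, TrivSqZeroExt.ext_iff]

end Differential

section GenericSmoothness

theorem formallySmooth_of_essFiniteType (A L : Type*) [CommRing A] [IsDomain A] [CharZero A]
    [Field L] [Algebra A L] [FaithfulSMul A L] [Algebra.EssFiniteType A L] :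
    Algebra.FormallySmooth A L := by
  let := FractionRing.liftAlgebra A L
  have : Algebra.EssFiniteType (FractionRing A) L :=
    Algebra.EssFiniteType.of_comp A (FractionRing A) L
  have : Algebra.FormallySmooth (FractionRing A) L := Algebra.FormallySmooth.of_perfectField
  have : Algebra.FormallySmooth A (FractionRing A) :=
    Algebra.FormallySmooth.of_isLocalization (nonZeroDivisors A)
  exact Algebra.FormallySmooth.comp A (FractionRing A) L

theorem exists_smooth_localizationAway (A B : Type*) [CommRing A] [IsDomain A] [CharZero A]
    [CommRing B] [IsDomain B] [Algebra A B] [FaithfulSMul A B] [Algebra.FinitePresentation A B] :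
    ∃ d : B, d ≠ 0 ∧ Algebra.Smooth A (Localization.Away d) := by
  have : IsFractionRing B (Localization.AtPrime (⊥ : Ideal B)) := by
    simpa [Ideal.primeCompl_bot] using Localization.isLocalization (M := (⊥ : Ideal B).primeCompl)
  let : Field (Localization.AtPrime (⊥ : Ideal B)) := IsFractionRing.toField B
  have : FaithfulSMul A (Localization.AtPrime (⊥ : Ideal B)) := by
    rw [faithfulSMul_iff_algebraMap_injective,
      IsScalarTower.algebraMap_eq A B (Localization.AtPrime ⊥)]
    exact (IsFractionRing.injective B _).comp (FaithfulSMul.algebraMap_injective A B)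
  have : Algebra.EssFiniteType B (Localization.AtPrime (⊥ : Ideal B)) :=
    Algebra.EssFiniteType.of_isLocalization _ (⊥ : Ideal B).primeCompl
  have : Algebra.EssFiniteType A (Localization.AtPrime (⊥ : Ideal B)) :=
    Algebra.EssFiniteType.comp A B _
  have : Algebra.IsSmoothAt A (⊥ : Ideal B) := formallySmooth_of_essFiniteType A _
  simpa using Algebra.IsSmoothAt.exists_notMem_smooth A (⊥ : Ideal B)

theorem exists_algHom_lift_of_formallySmooth_away {A B C D : Type*} [CommRing A] [CommRing B]
    [CommRing C] [CommRing D] [Algebra A B] [Algebra A C] [Algebra A D] (d : B)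
    [Algebra.FormallySmooth A (Localization.Away d)] (π : C →ₐ[A] D)
    (hπ : Function.Surjective π) (hker : IsNilpotent (RingHom.ker (π : C →+* D))) (y : B →ₐ[A] D)
    (hd : IsUnit (y d)) : ∃ Θ : B →ₐ[A] C, π.comp Θ = y := by
  let y' : Localization.Away d →ₐ[A] D := IsLocalization.Away.liftAlgHom (x := d) hd
  refine ⟨(Algebra.FormallySmooth.liftOfSurjective y' π hπ hker).comp
    (IsScalarTower.toAlgHom A B (Localization.Away d)), ?_⟩
  rw [← AlgHom.comp_assoc, Algebra.FormallySmooth.comp_liftOfSurjective]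
  ext b
  simp [y']

variable {K R S : Type*} [Field K] [CharZero K] [CommRing R] [CommRing S] [Algebra K R]
  [Algebra K S]

theorem exists_notMem_forall_algHom_lift [Algebra.FiniteType K R] [Algebra.FiniteType K S]
    (φ : R →ₐ[K] S) (P : Ideal S) [P.IsPrime] :
    ∃ d ∉ P, ∀ {C D : Type*} [CommRing C] [CommRing D] [Algebra K C] [Algebra K D]
      (π : C →ₐ[K] D) (θ : R →ₐ[K] C) (y : S →ₐ[K] D), Function.Surjective π →
      IsNilpotent (RingHom.ker (π : C →+* D)) → (∀ f ∈ P.comap φ, θ f = 0) → (∀ f ∈ P, y f = 0) →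
      IsUnit (y d) → π.comp θ = y.comp φ →
      ∃ Θ : S →ₐ[K] C, π.comp Θ = y ∧ Θ.comp φ = θ ∧ ∀ f ∈ P, Θ f = 0 := by
  let ψ : R ⧸ P.comap φ →ₐ[K] S ⧸ P := Ideal.quotientMapₐ P φ le_rfl
  algebraize [(ψ : R ⧸ P.comap φ →+* S ⧸ P)]
  have : IsScalarTower K (R ⧸ P.comap φ) (S ⧸ P) := .of_algHom ψ
  have : FaithfulSMul (R ⧸ P.comap φ) (S ⧸ P) := by
    rw [faithfulSMul_iff_algebraMap_injective]
    exact Ideal.quotientMap_injective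
  have : CharZero (R ⧸ P.comap φ) :=
    charZero_of_injective_algebraMap (algebraMap K _).injective
  have : IsNoetherianRing R := Algebra.FiniteType.isNoetherianRing K R
  have : Algebra.FiniteType (R ⧸ P.comap φ) (S ⧸ P) :=
    Algebra.FiniteType.of_restrictScalars_finiteType K _ _
  have : Algebra.FinitePresentation (R ⧸ P.comap φ) (S ⧸ P) :=
    Algebra.FinitePresentation.of_finiteType.1 ‹_›
  obtain ⟨d, hd, hsmooth⟩ := exists_smooth_localizationAway (R ⧸ P.comap φ) (S ⧸ P)
  obtain ⟨d, rfl⟩ := Ideal.Quotient.mk_surjective d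
  refine ⟨d, by simpa [Ideal.Quotient.eq_zero_iff_mem] using hd, ?_⟩
  intro C D _ _ _ _ π θ y hπ hker hθ hy hyd hcomp
  let θ' := Ideal.Quotient.liftₐ (P.comap φ) θ hθ
  let y' := Ideal.Quotient.liftₐ P y hy
  have hcomp' : π.comp θ' = y'.comp ψ := Ideal.Quotient.algHom_ext _ hcomp
  algebraize [(θ' : R ⧸ P.comap φ →+* C),
    ((y'.comp ψ : R ⧸ P.comap φ →ₐ[K] D) : R ⧸ P.comap φ →+* D)]
  obtain ⟨Θ, hΘ⟩ := exists_algHom_lift_of_formallySmooth_away (Ideal.Quotient.mk P d)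
    { π with commutes' := DFunLike.congr_fun hcomp' } hπ hker
    { y' with commutes' := fun _ => rfl } hyd
  have : IsScalarTower K (R ⧸ P.comap φ) C := .of_algHom θ'
  refine ⟨(Θ.restrictScalars K).comp (Ideal.Quotient.mkₐ K P), ?_, ?_, fun f hf => ?_⟩
  · ext f
    exact DFunLike.congr_fun hΘ (Ideal.Quotient.mk P f)
  · ext f
    exact Θ.commutes (Ideal.Quotient.mk _ f)
  · simp [Ideal.Quotient.eq_zero_iff_mem.2 hf]

end GenericSmoothness

section GenericSubmersion

variable {K σ τ : Type*} [Field K] [Fintype σ] [Fintype τ]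

theorem exists_notMem_forall_tangent_lift [CharZero K] (g : σ → MvPolynomial τ K)
    (P : Ideal (MvPolynomial τ K)) [P.IsPrime] :
    ∃ d ∉ P, ∀ y : τ → K, (∀ f ∈ P, eval y f = 0) → eval y d ≠ 0 →
      ∀ w ∈ tangentSpace (P.comap (bind₁ g)) (fun i => eval y (g i)),
        ∃ v ∈ tangentSpace P y, ∀ i, differential y (g i) v = w i := by
  obtain ⟨d, hd, hlift⟩ := exists_notMem_forall_algHom_lift (bind₁ g) P
  refine ⟨d, hd, fun y hy hyd w hw => ?_⟩
  let x i := eval y (g i)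
  have hx f : eval x f = eval y (bind₁ g f) := (eval_bind₁ g y f).symm
  have hker : IsNilpotent (RingHom.ker (TrivSqZeroExt.fstHom K K K : DualNumber K →+* K)) :=
    ⟨2, TrivSqZeroExt.kerIdeal_sq K K⟩
  obtain ⟨Θ, hΘy, hΘw, hΘP⟩ := hlift (TrivSqZeroExt.fstHom K K K) (aeval (dualPoint x w)) (aeval y)
    (fun z => ⟨TrivSqZeroExt.inl z, rfl⟩) hker
    ((mem_tangentSpace_iff_forall_aeval_dualPoint fun f hf => (hx f).trans (hy _ hf)).1 hw)
    hy hyd.isUnit (by ext i; simp [dualPoint, x, aeval_eq_eval])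
  have hΘ : Θ = aeval (dualPoint y fun j => (Θ (X j)).snd) := by
    ext j
    · simpa [dualPoint] using DFunLike.congr_fun hΘy (X j)
    · simp [dualPoint]
  refine ⟨fun j => (Θ (X j)).snd, ?_, fun i => ?_⟩
  · rw [mem_tangentSpace_iff_forall_aeval_dualPoint hy, ← hΘ]
    exact hΘP
  · have h := DFunLike.congr_fun hΘw (X i)
    rw [AlgHom.comp_apply, bind₁_X_right, hΘ, aeval_dualPoint, aeval_X] at h
    simpa [dualPoint] using congrArg TrivSqZeroExt.snd h

end GenericSubmersion

section VanishingIdeal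

variable {K σ ι : Type*} [Field K]

theorem mem_vanishingIdeal_iff_eval {V : Set (σ → K)} {f : MvPolynomial σ K} :
    f ∈ vanishingIdeal K V ↔ ∀ x ∈ V, eval x f = 0 :=
  Iff.rfl

theorem isPrime_vanishingIdeal_iff {V : Set (σ → K)} :
    (vanishingIdeal K V).IsPrime ↔ V.Nonempty ∧ ∀ f g : MvPolynomial σ K,
      (∃ x ∈ V, eval x f ≠ 0) → (∃ x ∈ V, eval x g ≠ 0) → ∃ x ∈ V, eval x f ≠ 0 ∧ eval x g ≠ 0 := by
  have hne : vanishingIdeal K V ≠ ⊤ ↔ V.Nonempty := by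
    rw [Ne, Ideal.eq_top_iff_one, mem_vanishingIdeal_iff_eval, Set.nonempty_def]
    simp
  rw [Ideal.isPrime_iff, hne]
  refine and_congr_right fun _ => forall₂_congr fun f g => ?_
  rw [← not_imp_not]
  simp only [mem_vanishingIdeal_iff_eval, map_mul, mul_eq_zero]
  push Not
  exact and_imp

theorem isAlg_setOf_eval_eq_zero {N : ℕ} (f : MvPolynomial (Fin N) ℂ) :
    IsAlg {x | eval x f = 0} :=
  ⟨{f}, by simp⟩

theorem IrrAlg.isPrime_vanishingIdeal {N : ℕ} {S : Set (Fin N → ℂ)} (hS : IrrAlg S) :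
    (vanishingIdeal ℂ S).IsPrime := by
  refine isPrime_vanishingIdeal_iff.2 ⟨hS.2.1, fun f g => ?_⟩
  rintro ⟨x, hx, hfx⟩ ⟨y, hy, hgy⟩
  by_contra! h
  have hcover : S ⊆ {x | eval x f = 0} ∪ {x | eval x g = 0} :=
    fun z hz => or_iff_not_imp_left.2 (h z hz)
  rcases hS.2.2 _ _ (isAlg_setOf_eval_eq_zero f) (isAlg_setOf_eval_eq_zero g) hcover with hf | hg
  · exact hfx (hf hx)
  · exact hgy (hg hy)

theorem exists_eval_eq_eval_update (q : ι → σ → K) (i : ι) (f : MvPolynomial (ι × σ) K) :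
    ∃ g : MvPolynomial σ K, ∀ x, eval x g = eval (Function.uncurry (Function.update q i x)) f := by
  refine ⟨bind₁ (Function.uncurry (Function.update (fun j s => C (q j s)) i X)) f, fun x => ?_⟩
  rw [eval_bind₁]
  congr 2
  ext ⟨j, s⟩
  obtain rfl | h := eq_or_ne j i
  · simp
  · simp [h]

theorem isPrime_vanishingIdeal_pi [Finite ι] {V : ι → Set (σ → K)}
    (hV : ∀ i, (vanishingIdeal K (V i)).IsPrime) :
    (vanishingIdeal K (Function.uncurry '' Set.univ.pi V)).IsPrime := by
  cases nonempty_fintype ι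
  simp only [isPrime_vanishingIdeal_iff, Set.exists_mem_image, Set.image_nonempty] at hV ⊢
  refine ⟨Set.univ_pi_nonempty_iff.2 fun i => (hV i).1, fun f g => ?_⟩
  rintro ⟨p, hp, hfp⟩ ⟨q, hq, hgq⟩
  -- Points where `f` and `g` do not vanish are made to agree in one factor after the other.
  have agree_on (s : Finset ι) : ∃ p ∈ Set.univ.pi V, ∃ q ∈ Set.univ.pi V,
      eval (Function.uncurry p) f ≠ 0 ∧ eval (Function.uncurry q) g ≠ 0 ∧ ∀ i ∈ s, p i = q i := by
    induction s using Finset.induction_on with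
    | empty => exact ⟨p, hp, q, hq, hfp, hgq, by simp⟩
    | insert i s _ ih =>
      obtain ⟨p, hp, q, hq, hfp, hgq, hpq⟩ := ih
      obtain ⟨f', hf'⟩ := exists_eval_eq_eval_update p i f
      obtain ⟨g', hg'⟩ := exists_eval_eq_eval_update q i g
      obtain ⟨x, hx, hfx, hgx⟩ := (hV i).2 f' g' ⟨p i, hp i trivial, by simpa [hf']⟩
        ⟨q i, hq i trivial, by simpa [hg']⟩
      refine ⟨Function.update p i x, (Set.update_mem_pi_iff_of_mem hp).2 fun _ => hx,
        Function.update q i x, (Set.update_mem_pi_iff_of_mem hq).2 fun _ => hx,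
        hf' x ▸ hfx, hg' x ▸ hgx, fun j hj => ?_⟩
      obtain rfl | h := eq_or_ne j i
      · simp
      · simpa [h] using hpq j (Finset.mem_of_mem_insert_of_ne hj h)
  obtain ⟨p, hp, q, -, hfp, hgq, hpq⟩ := agree_on Finset.univ
  obtain rfl : p = q := funext fun i => hpq i (Finset.mem_univ i)
  exact ⟨p, hp, hfp, hgq⟩

end VanishingIdeal

section Translation

variable {K σ : Type*} [CommRing K]

/-- The substitution `f(x) ↦ f(x + b)` on polynomials. -/
def translateAlgHom (b : σ → K) : MvPolynomial σ K →ₐ[K] MvPolynomial σ K :=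
  bind₁ fun i => X i + C (b i)

theorem eval_translateAlgHom (b y : σ → K) (f : MvPolynomial σ K) :
    eval y (translateAlgHom b f) = eval (y + b) f := by
  rw [translateAlgHom, eval_bind₁]
  simp [Pi.add_def]

theorem differential_translateAlgHom [Fintype σ] (b y : σ → K) (f : MvPolynomial σ K) :
    differential y (translateAlgHom b f) = differential (y + b) f := by
  ext v
  simp [translateAlgHom, differential_bind₁, Pi.add_def]

end Translation

section Sumset

open scoped Pointwise

variable {K σ ι : Type*} [Field K]

theorem mem_vanishingIdeal_add_iff {V W : Set (σ → K)} {f : MvPolynomial σ K} :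
    f ∈ vanishingIdeal K (V + W) ↔ ∀ w ∈ W, translateAlgHom w f ∈ vanishingIdeal K V := by
  simp only [mem_vanishingIdeal_iff_eval, ← Set.image2_add, Set.forall_mem_image2,
    eval_translateAlgHom]
  exact forall₂_comm

theorem vanishingIdeal_add_congr_left {V V' : Set (σ → K)}
    (h : vanishingIdeal K V = vanishingIdeal K V') (W : Set (σ → K)) :
    vanishingIdeal K (V + W) = vanishingIdeal K (V' + W) := by
  ext f
  simp only [mem_vanishingIdeal_add_iff, h]

theorem vanishingIdeal_sum [Fintype ι] (V : ι → Set (σ → K)) :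
    vanishingIdeal K (∑ i, V i) =
      (vanishingIdeal K (Function.uncurry '' Set.univ.pi V)).comap
        (bind₁ fun s => ∑ i, X (i, s)) := by
  ext f
  simp only [Ideal.mem_comap, mem_vanishingIdeal_iff_eval, ← Set.image_fintype_sum_pi,
    Set.forall_mem_image, eval_bind₁, map_sum, eval_X, Function.uncurry, ← Finset.sum_apply]

variable [Fintype σ]

theorem tangentSpace_le_tangentSpace_add {V W : Set (σ → K)} {x y : σ → K} (hy : y ∈ W) :
    tangentSpace (vanishingIdeal K V) x ≤ tangentSpace (vanishingIdeal K (V + W)) (x + y) := by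
  intro v hv
  rw [mem_tangentSpace] at hv ⊢
  intro f hf
  rw [← differential_translateAlgHom]
  exact hv _ (mem_vanishingIdeal_add_iff.1 hf y hy)

theorem tangentSpace_le_tangentSpace_sum [Fintype ι] {V : ι → Set (σ → K)} {q : ι → σ → K}
    (hq : ∀ i, q i ∈ V i) (i : ι) :
    tangentSpace (vanishingIdeal K (V i)) (q i) ≤
      tangentSpace (vanishingIdeal K (∑ j, V j)) (∑ j, q j) := by
  rw [← Finset.add_sum_erase _ V (Finset.mem_univ i),
    ← Finset.add_sum_erase _ q (Finset.mem_univ i)]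
  exact tangentSpace_le_tangentSpace_add (Set.finsetSum_mem_finsetSum _ _ _ fun j _ => hq j)

theorem mem_tangentSpace_of_mem_tangentSpace_pi [Fintype ι] {V : ι → Set (σ → K)} {q : ι → σ → K}
    {v : ι × σ → K}
    (hv : v ∈ tangentSpace (vanishingIdeal K (Function.uncurry '' Set.univ.pi V))
      (Function.uncurry q)) (i : ι) :
    Function.curry v i ∈ tangentSpace (vanishingIdeal K (V i)) (q i) := by
  rw [mem_tangentSpace] at hv ⊢
  intro f hf
  have h := hv (bind₁ (fun s => X (i, s)) f) ?_
  · simp only [differential_bind₁, eval_X, differential_X] at h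
    exact h
  · rintro _ ⟨p, hp, rfl⟩
    simpa [aeval_eq_eval, eval_bind₁] using hf _ (hp i trivial)

theorem exists_notMem_tangentSpace_sum_eq_iSup [CharZero K] [Fintype ι] {V : ι → Set (σ → K)}
    (hV : ∀ i, (vanishingIdeal K (V i)).IsPrime) :
    ∃ d ∉ vanishingIdeal K (Function.uncurry '' Set.univ.pi V),
      ∀ q ∈ Set.univ.pi V, eval (Function.uncurry q) d ≠ 0 →
        tangentSpace (vanishingIdeal K (∑ i, V i)) (∑ i, q i) =
          ⨆ i, tangentSpace (vanishingIdeal K (V i)) (q i) := by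
  have := isPrime_vanishingIdeal_pi hV
  obtain ⟨d, hd, hlift⟩ := exists_notMem_forall_tangent_lift (fun s => ∑ i, X (i, s))
    (vanishingIdeal K (Function.uncurry '' Set.univ.pi V))
  refine ⟨d, hd, fun q hq hdq => le_antisymm (fun w hw => ?_) <|
    iSup_le <| tangentSpace_le_tangentSpace_sum fun i => hq i trivial⟩
  rw [vanishingIdeal_sum] at hw
  obtain ⟨v, hv, hvw⟩ := hlift _ (fun f hf => hf _ (Set.mem_image_of_mem _ hq)) hdq w
    (by convert hw; simp)
  have hw : w = ∑ i, Function.curry v i := by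
    ext s
    simp [← hvw, Function.curry]
  rw [hw]
  exact Submodule.sum_mem _ fun i _ => Submodule.mem_iSup_of_mem i <|
    mem_tangentSpace_of_mem_tangentSpace_pi hv i

end Sumset

section Scaling

variable {K σ : Type*} [Field K] [Fintype σ] {V : Set (σ → K)} {c : K}

theorem tangentSpace_smul_le (hV : ∀ c : K, ∀ x ∈ V, c • x ∈ V) (hc : c ≠ 0) (x : σ → K) :
    tangentSpace (vanishingIdeal K V) (c • x) ≤ tangentSpace (vanishingIdeal K V) x := by
  intro v hv
  rw [mem_tangentSpace] at hv ⊢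
  intro f hf
  have hscale : bind₁ (fun s => c⁻¹ • X s) f ∈ vanishingIdeal K V := fun y hy => by
    rw [aeval_bind₁]
    simpa [Pi.smul_def] using hf _ (hV c⁻¹ y hy)
  have hpoint : (fun s => eval (c • x) (c⁻¹ • X s)) = x := by
    ext s
    simp [smul_eval, hc]
  have hdirection : (fun s => differential (c • x) (c⁻¹ • X s) v) = c⁻¹ • v := by
    ext s
    simp
  have hvf := hv _ hscale
  rw [differential_bind₁, hpoint, hdirection, map_smul] at hvf
  exact (smul_eq_zero.1 hvf).resolve_left (inv_ne_zero hc)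

theorem tangentSpace_smul (hV : ∀ c : K, ∀ x ∈ V, c • x ∈ V) (hc : c ≠ 0) (x : σ → K) :
    tangentSpace (vanishingIdeal K V) (c • x) = tangentSpace (vanishingIdeal K V) x :=
  (tangentSpace_smul_le hV hc x).antisymm <| by
    simpa [hc] using tangentSpace_smul_le hV (inv_ne_zero hc) (c • x)

end Scaling

section GeneralPointOfSpan

variable {K ι σ : Type*} [Field K]

theorem exists_eval_ne_zero_forall_mem_range [Finite ι] [Finite σ] (T : (ι → K) →ₗ[K] σ → K)
    (d : MvPolynomial ι K) {c₀ : ι → K} (hc₀ : eval c₀ d ≠ 0) :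
    ∃ H : MvPolynomial σ K, eval (T c₀) H ≠ 0 ∧
      ∀ x ∈ LinearMap.range T, eval x H ≠ 0 → ∃ c, eval c d ≠ 0 ∧ T c = x := by
  cases nonempty_fintype ι
  cases nonempty_fintype σ
  obtain ⟨s₀, hs₀⟩ := T.rangeRestrict.exists_rightInverse_of_surjective T.range_rangeRestrict
  obtain ⟨s, hs⟩ := LinearMap.exists_extend s₀
  have hTs x (hx : x ∈ LinearMap.range T) : T (s x) = x := by
    have hsx : s x = s₀ ⟨x, hx⟩ := LinearMap.congr_fun hs ⟨x, hx⟩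
    rw [hsx]
    exact congrArg Subtype.val (LinearMap.congr_fun hs₀ ⟨x, hx⟩)
  -- `x ↦ s x + κ` is an affine section of `T` over its range sending `T c₀` to `c₀`.
  let κ := c₀ - s (T c₀)
  have hκ : T κ = 0 := by simp [κ, hTs]
  let H := bind₁ s.toMatrix'.toMvPolynomial (translateAlgHom κ d)
  have hH x : eval x H = eval (s x + κ) d := by
    simp [H, eval_bind₁, Matrix.toMvPolynomial_eval_eq_apply, eval_translateAlgHom]
  refine ⟨H, ?_⟩
  simp only [hH]
  exact ⟨by simpa [κ] using hc₀, fun x hx hdx => ⟨s x + κ, hdx, by simp [hTs x hx, hκ]⟩⟩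

theorem exists_eval_ne_zero_forall_mem_span [Fintype ι] [Finite σ] (p : ι → σ → K)
    (d : MvPolynomial (ι × σ) K) (hd : eval (Function.uncurry p) d ≠ 0) :
    ∃ H : MvPolynomial σ K, (∃ x ∈ Submodule.span K (Set.range p), eval x H ≠ 0) ∧
      ∀ x ∈ Submodule.span K (Set.range p), eval x H ≠ 0 →
        ∃ c : ι → K, (∀ i, c i ≠ 0) ∧ eval (Function.uncurry fun i => c i • p i) d ≠ 0 ∧
          ∑ i, c i • p i = x := by
  let D : MvPolynomial ι K := bind₁ (fun z => p z.1 z.2 • X z.1) d * ∏ i, X i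
  have hD c : eval c D = eval (Function.uncurry fun i => c i • p i) d * ∏ i, c i := by
    simp only [D, map_mul, map_prod, eval_X, eval_bind₁, smul_eval, Function.uncurry_def,
      Pi.smul_apply, smul_eq_mul, mul_comm]
  obtain ⟨H, hH, hlift⟩ := exists_eval_ne_zero_forall_mem_range (Fintype.linearCombination K p) D
    (c₀ := 1) (by simpa [hD] using hd)
  rw [Fintype.range_linearCombination] at hlift
  refine ⟨H, ⟨_, ?_, hH⟩, fun x hx hHx => ?_⟩
  · rw [← Fintype.range_linearCombination K]
    exact LinearMap.mem_range_self _ _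
  · obtain ⟨c, hc, hcx⟩ := hlift x hx hHx
    rw [hD, mul_ne_zero_iff, Finset.prod_ne_zero_iff] at hc
    exact ⟨c, fun i => hc.2 i (Finset.mem_univ i), hc.1, hcx⟩

end GeneralPointOfSpan

section Secant

variable {N : ℕ}

theorem vanishingIdeal_zcl (S : Set (Fin N → ℂ)) :
    vanishingIdeal ℂ (zcl S) = vanishingIdeal ℂ S :=
  (vanishingIdeal_anti_mono <| Set.subset_sInter fun _ hT => hT.2).antisymm
    fun f hf _ hy => hy _ ⟨isAlg_setOf_eval_eq_zero f, hf⟩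

open scoped Pointwise in
theorem vanishingIdeal_secant (k : ℕ) (S : Set (Fin N → ℂ)) :
    vanishingIdeal ℂ (secant k S) = vanishingIdeal ℂ (∑ _ : Fin (k + 1), S) := by
  induction k with
  | zero => simp [secant, vanishingIdeal_zcl]
  | succ k ih =>
    have hjoin : {x | ∃ u ∈ secant k S, ∃ v ∈ S, x = u + v} = secant k S + S := by
      ext x
      simp [Set.mem_add, eq_comm]
    rw [secant, joinSet, vanishingIdeal_zcl, hjoin, vanishingIdeal_add_congr_left ih,
      Fin.sum_univ_castSucc (n := k + 1)]

theorem embTangent_eq_tangentSpace (S : Set (Fin N → ℂ)) (x : Fin N → ℂ) :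
    embTangent S x = tangentSpace (vanishingIdeal ℂ S) x := by
  ext v
  simp [embTangent, mem_tangentSpace, differential_apply, aeval_eq_eval]

theorem tanSpan_eq_tangentSpace (S : Set (Fin N → ℂ)) (x : Fin N → ℂ) :
    tanSpan S x = tangentSpace (vanishingIdeal ℂ S) x := by
  rw [tanSpan, embTangent_eq_tangentSpace, Submodule.span_eq]

theorem span_iUnion_embTangent {ι : Type*} (S : Set (Fin N → ℂ)) (p : ι → Fin N → ℂ) :
    Submodule.span ℂ (⋃ i, embTangent S (p i)) =
      ⨆ i, tangentSpace (vanishingIdeal ℂ S) (p i) := by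
  simp only [embTangent_eq_tangentSpace, Submodule.iSup_eq_span]

end Secant

/-- Terracini's Lemma: for general points `p_0,…,p_k` of an
irreducible variety `X` and a general point `x` of their span, the tangent
space of `S^k(X)` at `x` is the span of the tangent spaces `T_{X,p_i}`. -/
theorem terracini (r n k : ℕ) (X : Set (Fin (r+1) → ℂ))
    (hX : IrrAlg X) (hc : IsCone X) (hne : X ≠ {0}) (hdim : pdim X = nn n) :
    Generically (k+1) X fun p =>
      ∃ C : Set (Fin (r+1) → ℂ), IsAlg C ∧
        ¬ ((Submodule.span ℂ (Set.range p) : Set (Fin (r+1) → ℂ)) ⊆ C) ∧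
        ∀ x ∈ Submodule.span ℂ (Set.range p), x ∉ C →
          tanSpan (secant k X) x = Submodule.span ℂ (⋃ i, embTangent X (p i)) := by
  obtain ⟨d, hd, hsum⟩ :=
    exists_notMem_tangentSpace_sum_eq_iSup fun _ : Fin (k + 1) => hX.isPrime_vanishingIdeal
  refine ⟨{q | eval (Function.uncurry q) d = 0}, ⟨{d}, by simp [Function.uncurry_def]⟩,
    fun h => hd <| Set.forall_mem_image.2 fun q hq => h fun i => hq i trivial, fun p hp hdp => ?_⟩
  obtain ⟨H, ⟨y, hy, hHy⟩, hH⟩ := exists_eval_ne_zero_forall_mem_span p d hdp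
  refine ⟨{x | eval x H = 0}, isAlg_setOf_eval_eq_zero H, fun h => hHy (h hy), fun x hx hHx => ?_⟩
  obtain ⟨c, hc₀, hdc, rfl⟩ := hH x hx hHx
  calc tanSpan (secant k X) (∑ i, c i • p i)
    _ = ⨆ i, tangentSpace (vanishingIdeal ℂ X) (c i • p i) := by
      rw [tanSpan_eq_tangentSpace, vanishingIdeal_secant,
        hsum _ (fun i _ => hc.2 _ _ (hp i).1) hdc]
    _ = ⨆ i, tangentSpace (vanishingIdeal ℂ X) (p i) := by
      simp only [tangentSpace_smul hc.2 (hc₀ _)]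
    _ = Submodule.span ℂ (⋃ i, embTangent X (p i)) := (span_iUnion_embTangent X p).symm
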